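/- arXiv:1307.7217 — 2 statements merged into one kernel-verified Lean document; each statement's English description precedes it below -/
import Mathlib

section
/- (Basic identity of the two-layer multidimensional transform, Theorem 1.) Let m ≥ 1, a₁, a₂, ν, ρ > 0. Let f₁, f₂ : ℝ × ℝ^m → ℂ be twice continuously differentiable and compactly supported, satisfying the ideal coupling conditions f₁(0,η) = f₂(0,η) and ∂_ξf₁(0,η) = ν·∂_ξf₂(0,η) for all η ∈ ℝ^m. Let g₁, g₂ : ℝ × ℝ^m → ℂ be twice continuously differentiable with g_j and all its first and second partial derivatives bounded, satisfying the eigenvalue equations a_j²·∂²_ξ g_j + Δ_η g_j = −ρ²·g_j (j = 1,2) and the dual coupling conditions ν·a₁²·g₁(0,η) = a₂²·g₂(0,η) and a₁²·∂_ξg₁(0,η) = a₂²·∂_ξg₂(0,η) for all η. Then ∫_{ξ<0}∫_{ℝ^m} g₁·(a₁²·∂²_ξ f₁ + Δ_η f₁) dη dξ + ∫_{ξ>0}∫_{ℝ^m} g₂·(a₂²·∂²_ξ f₂ + Δ_η f₂) dη dξ = −ρ²·(∫_{ξ<0}∫_{ℝ^m} g₁·f₁ dη dξ + ∫_{ξ>0}∫_{ℝ^m}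 g₂·f₂ dη dξ). -/
open MeasureTheory Set Complex

noncomputable section

/-- First partial derivative `∂f/∂ξ` of `f : ℝ × ℝ^m → ℂ` in the first (scalar) variable. -/
def dxi (m : ℕ) (f : ℝ × EuclideanSpace ℝ (Fin m) → ℂ)
    (p : ℝ × EuclideanSpace ℝ (Fin m)) : ℂ :=
  deriv (fun t => f (t, p.2)) p.1

/-- Second partial derivative `∂²f/∂ξ²` of `f : ℝ × ℝ^m → ℂ` in the first (scalar)
variable, via the second iterated Fréchet derivative. -/
def d2xi (m : ℕ) (f : ℝ × EuclideanSpace ℝ (Fin m) → ℂ)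
    (p : ℝ × EuclideanSpace ℝ (Fin m)) : ℂ :=
  iteratedFDeriv ℝ 2 f p
    ![((1 : ℝ), (0 : EuclideanSpace ℝ (Fin m))), ((1 : ℝ), (0 : EuclideanSpace ℝ (Fin m)))]

/-- The Laplacian `Δ_η` of `f : ℝ × ℝ^m → ℂ` in the second (vector) variable. -/
def lapEta (m : ℕ) (f : ℝ × EuclideanSpace ℝ (Fin m) → ℂ)
    (p : ℝ × EuclideanSpace ℝ (Fin m)) : ℂ :=
  ∑ i : Fin m, iteratedFDeriv ℝ 2 f p
    ![((0 : ℝ), EuclideanSpace.single i (1 : ℝ)), ((0 : ℝ), EuclideanSpace.single i (1 : ℝ))]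

theorem HasCompactSupport.slice_left {E : Type*} [TopologicalSpace E] {W : ℝ × E → ℂ}
    (hW : HasCompactSupport W) (η : E) : HasCompactSupport fun t => W (t, η) :=
  HasCompactSupport.intro (hW.isCompact.image continuous_fst) fun t ht =>
    image_eq_zero_of_notMem_tsupport fun h => ht ⟨(t, η), h, rfl⟩

theorem HasCompactSupport.slice_right {E : Type*} [TopologicalSpace E] [R1Space E] {W : ℝ × E → ℂ}
    (hW : HasCompactSupport W) (t : ℝ) : HasCompactSupport fun η => W (t, η) :=
  HasCompactSupport.intro (hW.isCompact.image continuous_snd) fun η hη =>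
    image_eq_zero_of_notMem_tsupport fun h => hη ⟨(t, η), h, rfl⟩

section DirectionalIntegrals

variable {E : Type*} [NormedAddCommGroup E] [NormedSpace ℝ E]

/-- The Green flux of `f` and `g` in the direction `v`, whose derivative along `v` is
`g ∂ᵥ²f - f ∂ᵥ²g`. -/
def greenFlux (f g : E → ℂ) (v p : E) : ℂ :=
  g p * fderiv ℝ f p v - fderiv ℝ g p v * f p

theorem contDiff_greenFlux {f g : E → ℂ} (hf : ContDiff ℝ 2 f) (hg : ContDiff ℝ 2 g) (v : E) :
    ContDiff ℝ 1 (greenFlux f g v) := by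
  have hf' : ContDiff ℝ 1 (fderiv ℝ f) := hf.fderiv_right (by norm_num)
  have hg' : ContDiff ℝ 1 (fderiv ℝ g) := hg.fderiv_right (by norm_num)
  exact ((hg.of_le one_le_two).mul (hf'.clm_apply contDiff_const)).sub
    ((hg'.clm_apply contDiff_const).mul (hf.of_le one_le_two))

theorem HasCompactSupport.greenFlux {f : E → ℂ} (hf : HasCompactSupport f) (g : E → ℂ) (v : E) :
    HasCompactSupport (greenFlux f g v) :=
  ((hf.fderiv_apply ℝ v).mul_left (f := g)).sub (hf.mul_left (f := fun p => fderiv ℝ g p v))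

theorem fderiv_greenFlux_apply {f g : E → ℂ} (hf : ContDiff ℝ 2 f) (hg : ContDiff ℝ 2 g)
    (v p : E) :
    fderiv ℝ (greenFlux f g v) p v =
      g p * iteratedFDeriv ℝ 2 f p ![v, v] - iteratedFDeriv ℝ 2 g p ![v, v] * f p := by
  have key : ∀ h : E → ℂ, ContDiff ℝ 2 h → HasFDerivAt (fun q => fderiv ℝ h q v)
      ((fderiv ℝ (fderiv ℝ h) p).flip v) p := fun h hh => by
    have h' : ContDiff ℝ 1 (fderiv ℝ h) := hh.fderiv_right (by norm_num)
    simpa using (h'.differentiable one_ne_zero p).hasFDerivAt.clm_apply (hasFDerivAt_const v p)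
  have hF := ((hg.differentiable two_ne_zero p).hasFDerivAt.mul (key f hf)).sub
    ((key g hg).mul (hf.differentiable two_ne_zero p).hasFDerivAt)
  rw [show fderiv ℝ (greenFlux f g v) p = _ from hF.fderiv]
  simp [iteratedFDeriv_two_apply]
  ring

theorem deriv_slice_left {W : ℝ × E → ℂ} (hW : Differentiable ℝ W) (t : ℝ) (η : E) :
    deriv (fun s => W (s, η)) t = fderiv ℝ W (t, η) (1, 0) :=
  ((hW (t, η)).hasFDerivAt.comp_hasDerivAt t
    ((hasDerivAt_id t).prodMk (hasDerivAt_const t η))).deriv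

theorem fderiv_slice_right {W : ℝ × E → ℂ} (hW : Differentiable ℝ W) (t : ℝ) (η v : E) :
    fderiv ℝ (fun ζ => W (t, ζ)) η v = fderiv ℝ W (t, η) (0, v) := by
  have h := (hW (t, η)).hasFDerivAt.comp η
    ((hasFDerivAt_const t η).prodMk (hasFDerivAt_id η))
  exact congrArg (fun L : E →L[ℝ] ℂ => L v) h.fderiv

variable [FiniteDimensional ℝ E] [MeasurableSpace E] [BorelSpace E]
  {μ : Measure E} [μ.IsAddHaarMeasure]

theorem integrable_fderiv_apply {F : Type*} [NormedAddCommGroup F] [NormedSpace ℝ F]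
    [MeasurableSpace F] [OpensMeasurableSpace F] {κ : Measure F} [IsFiniteMeasureOnCompacts κ]
    {W : F → ℂ} (hW : ContDiff ℝ 1 W) (hc : HasCompactSupport W) (v : F) :
    Integrable (fun p => fderiv ℝ W p v) κ :=
  ((hW.continuous_fderiv one_ne_zero).clm_apply continuous_const).integrable_of_hasCompactSupport
    (hc.fderiv_apply ℝ v)

theorem integral_fderiv_apply_eq_zero {W : E → ℂ} (hW : ContDiff ℝ 1 W)
    (hc : HasCompactSupport W) (v : E) : ∫ p, fderiv ℝ W p v ∂μ = 0 := by
  have h := integral_mul_fderiv_eq_neg_fderiv_mul_of_integrable (μ := μ) (f := fun _ : E => (1 : ℂ))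
    (g := W) (v := v) (by simp) (by simpa using integrable_fderiv_apply hW hc v)
    (by simpa using hW.continuous.integrable_of_hasCompactSupport hc)
    (fun _ _ => differentiableAt_const _) (fun x _ => hW.differentiable one_ne_zero x)
  simpa using h

theorem setIntegral_prod_univ_fderiv_snd {W : ℝ × E → ℂ} (hW : ContDiff ℝ 1 W)
    (hc : HasCompactSupport W) (s : Set ℝ) (v : E) :
    ∫ p in s ×ˢ (univ : Set E), fderiv ℝ W p (0, v) ∂(volume.prod μ) = 0 := by
  rw [setIntegral_prod _ (integrable_fderiv_apply hW hc _).integrableOn]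
  simp_rw [← fderiv_slice_right (hW.differentiable one_ne_zero), Measure.restrict_univ]
  simp_rw [integral_fderiv_apply_eq_zero (W := fun ζ => W (_, ζ))
    (hW.comp (contDiff_prodMk_right _)) (hc.slice_right _)]
  simp

theorem setIntegral_prod_univ_fderiv_fst {W : ℝ × E → ℂ} (hW : ContDiff ℝ 1 W)
    (hc : HasCompactSupport W) (s : Set ℝ) :
    ∫ p in s ×ˢ (univ : Set E), fderiv ℝ W p (1, 0) ∂(volume.prod μ) =
      ∫ η, (∫ t in s, deriv (fun τ => W (τ, η)) t) ∂μ := by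
  rw [← Measure.prod_restrict, integral_prod_symm, Measure.restrict_univ]
  · simp_rw [deriv_slice_left (hW.differentiable one_ne_zero)]
  · rw [Measure.prod_restrict]
    exact (integrable_fderiv_apply hW hc _).integrableOn

theorem setIntegral_Iio_prod_univ_fderiv_fst {W : ℝ × E → ℂ} (hW : ContDiff ℝ 1 W)
    (hc : HasCompactSupport W) (b : ℝ) :
    ∫ p in Iio b ×ˢ (univ : Set E), fderiv ℝ W p (1, 0) ∂(volume.prod μ) =
      ∫ η, W (b, η) ∂μ := by
  rw [setIntegral_prod_univ_fderiv_fst hW hc]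
  refine integral_congr_ae (.of_forall fun η => ?_)
  beta_reduce
  rw [← integral_Iic_eq_integral_Iio]
  exact HasCompactSupport.integral_Iic_deriv_eq (f := fun τ => W (τ, η))
    (hW.comp (contDiff_prodMk_left η)) (hc.slice_left η) b

theorem setIntegral_Ioi_prod_univ_fderiv_fst {W : ℝ × E → ℂ} (hW : ContDiff ℝ 1 W)
    (hc : HasCompactSupport W) (b : ℝ) :
    ∫ p in Ioi b ×ˢ (univ : Set E), fderiv ℝ W p (1, 0) ∂(volume.prod μ) =
      -∫ η, W (b, η) ∂μ := by
  rw [setIntegral_prod_univ_fderiv_fst hW hc, ← integral_neg]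
  refine integral_congr_ae (.of_forall fun η => ?_)
  exact HasCompactSupport.integral_Ioi_deriv_eq (f := fun τ => W (τ, η))
    (hW.comp (contDiff_prodMk_left η)) (hc.slice_left η) b

end DirectionalIntegrals

section LayerOperator

variable {m : ℕ} {f g : ℝ × EuclideanSpace ℝ (Fin m) → ℂ}

theorem greenFlux_one_zero (hf : Differentiable ℝ f) (hg : Differentiable ℝ g)
    (p : ℝ × EuclideanSpace ℝ (Fin m)) :
    greenFlux f g (1, 0) p = g p * dxi m f p - dxi m g p * f p := by
  simp only [greenFlux, dxi, deriv_slice_left hf, deriv_slice_left hg]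

/-- **Green's identity** on a slab `s × ℝ^m`: for an eigenfunction `g` of
`c ∂²_ξ + Δ_η` and compactly supported `f`, only the normal flux contributes. -/
theorem setIntegral_mul_layerOperator (hf : ContDiff ℝ 2 f) (hc : HasCompactSupport f)
    (hg : ContDiff ℝ 2 g) {c lam : ℂ} (heig : ∀ p, c * d2xi m g p + lapEta m g p = lam * g p)
    (s : Set ℝ) :
    ∫ p in s ×ˢ (univ : Set (EuclideanSpace ℝ (Fin m))), g p * (c * d2xi m f p + lapEta m f p) =
      lam * (∫ p in s ×ˢ (univ : Set (EuclideanSpace ℝ (Fin m))), g p * f p) +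
        c * ∫ p in s ×ˢ (univ : Set (EuclideanSpace ℝ (Fin m))),
          fderiv ℝ (greenFlux f g (1, 0)) p (1, 0) := by
  have hint (v w : ℝ × EuclideanSpace ℝ (Fin m)) :
      IntegrableOn (fun p => fderiv ℝ (greenFlux f g v) p w) (s ×ˢ univ) :=
    (integrable_fderiv_apply (contDiff_greenFlux hf hg v) (hc.greenFlux g v) w).integrableOn
  have hgf : IntegrableOn (fun p => g p * f p) (s ×ˢ univ) :=
    ((hg.continuous.mul hf.continuous).integrable_of_hasCompactSupport hc.mul_left).integrableOn
  have hpt (p : ℝ × EuclideanSpace ℝ (Fin m)) :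
      g p * (c * d2xi m f p + lapEta m f p) =
        lam * (g p * f p) + c * fderiv ℝ (greenFlux f g (1, 0)) p (1, 0) +
          ∑ i, fderiv ℝ (greenFlux f g (0, EuclideanSpace.single i 1)) p
            (0, EuclideanSpace.single i 1) := by
    simp only [fderiv_greenFlux_apply hf hg, Finset.sum_sub_distrib, ← Finset.mul_sum,
      ← Finset.sum_mul]
    have := heig p
    simp only [d2xi, lapEta] at this ⊢
    linear_combination f p * this
  have hsum : ∫ p in s ×ˢ (univ : Set (EuclideanSpace ℝ (Fin m))),
      ∑ i, fderiv ℝ (greenFlux f g (0, EuclideanSpace.single i 1)) p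
        (0, EuclideanSpace.single i 1) = 0 := by
    rw [integral_finsetSum _ fun i _ => hint _ _]
    exact Finset.sum_eq_zero fun i _ => setIntegral_prod_univ_fderiv_snd
      (contDiff_greenFlux hf hg _) (hc.greenFlux g _) s _
  have hadd : IntegrableOn (fun p => lam * (g p * f p) +
      c * fderiv ℝ (greenFlux f g (1, 0)) p (1, 0)) (s ×ˢ univ) :=
    (hgf.const_mul _).add ((hint _ _).const_mul _)
  simp_rw [hpt]
  rw [integral_add hadd (integrable_finsetSum _ fun i _ => hint _ _),
    integral_add (hgf.const_mul _) ((hint _ _).const_mul _), hsum, add_zero,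
    integral_const_mul, integral_const_mul]

end LayerOperator

/-- basic identity of the two-layer multidimensional transform, Theorem 1:
for `f₁, f₂` C², compactly supported, satisfying the ideal coupling conditions at `ξ = 0`,
and eigen-kernels `g₁, g₂` of `B = a_j²∂²_ξ + Δ_η` with eigenvalue `−ρ²`, bounded together
with their first and second derivatives and satisfying the dual coupling conditions,
the transform intertwines `B` with multiplication by `−ρ²`. -/
theorem stmt7 (m : ℕ) (hm : 1 ≤ m) (a₁ a₂ ν ρ : ℝ)
    (ha₁ : 0 < a₁) (ha₂ : 0 < a₂) (hν : 0 < ν) (hρ : 0 < ρ)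
    (f₁ f₂ g₁ g₂ : ℝ × EuclideanSpace ℝ (Fin m) → ℂ)
    (hf₁ : ContDiff ℝ 2 f₁) (hf₂ : ContDiff ℝ 2 f₂)
    (hf₁supp : HasCompactSupport f₁) (hf₂supp : HasCompactSupport f₂)
    (hcoup₁ : ∀ η, f₁ (0, η) = f₂ (0, η))
    (hcoup₂ : ∀ η, dxi m f₁ (0, η) = (ν : ℂ) * dxi m f₂ (0, η))
    (hg₁ : ContDiff ℝ 2 g₁) (hg₂ : ContDiff ℝ 2 g₂)
    (hg₁bd : ∃ C, ∀ p, ‖g₁ p‖ ≤ C ∧ ‖fderiv ℝ g₁ p‖ ≤ C ∧ ‖iteratedFDeriv ℝ 2 g₁ p‖ ≤ C)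
    (hg₂bd : ∃ C, ∀ p, ‖g₂ p‖ ≤ C ∧ ‖fderiv ℝ g₂ p‖ ≤ C ∧ ‖iteratedFDeriv ℝ 2 g₂ p‖ ≤ C)
    (hg₁eig : ∀ p, (a₁ : ℂ) ^ 2 * d2xi m g₁ p + lapEta m g₁ p = -(ρ : ℂ) ^ 2 * g₁ p)
    (hg₂eig : ∀ p, (a₂ : ℂ) ^ 2 * d2xi m g₂ p + lapEta m g₂ p = -(ρ : ℂ) ^ 2 * g₂ p)
    (hdual₁ : ∀ η, (ν : ℂ) * (a₁ : ℂ) ^ 2 * g₁ (0, η) = (a₂ : ℂ) ^ 2 * g₂ (0, η))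
    (hdual₂ : ∀ η, (a₁ : ℂ) ^ 2 * dxi m g₁ (0, η) = (a₂ : ℂ) ^ 2 * dxi m g₂ (0, η)) :
    (∫ p in (Set.Iio (0 : ℝ)) ×ˢ (Set.univ : Set (EuclideanSpace ℝ (Fin m))),
        g₁ p * ((a₁ : ℂ) ^ 2 * d2xi m f₁ p + lapEta m f₁ p))
      + (∫ p in (Set.Ioi (0 : ℝ)) ×ˢ (Set.univ : Set (EuclideanSpace ℝ (Fin m))),
        g₂ p * ((a₂ : ℂ) ^ 2 * d2xi m f₂ p + lapEta m f₂ p))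
    = -(ρ : ℂ) ^ 2 *
      ((∫ p in (Set.Iio (0 : ℝ)) ×ˢ (Set.univ : Set (EuclideanSpace ℝ (Fin m))),
          g₁ p * f₁ p)
        + (∫ p in (Set.Ioi (0 : ℝ)) ×ˢ (Set.univ : Set (EuclideanSpace ℝ (Fin m))),
          g₂ p * f₂ p)) := by
  have hflux (η : EuclideanSpace ℝ (Fin m)) :
      (a₁ : ℂ) ^ 2 * greenFlux f₁ g₁ (1, 0) (0, η) =
        (a₂ : ℂ) ^ 2 * greenFlux f₂ g₂ (1, 0) (0, η) := by
    rw [greenFlux_one_zero (hf₁.differentiable two_ne_zero) (hg₁.differentiable two_ne_zero),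
      greenFlux_one_zero (hf₂.differentiable two_ne_zero) (hg₂.differentiable two_ne_zero),
      hcoup₁, hcoup₂]
    linear_combination dxi m f₂ (0, η) * hdual₁ η - f₂ (0, η) * hdual₂ η
  have hbdry : (a₁ : ℂ) ^ 2 * ∫ η, greenFlux f₁ g₁ (1, 0) (0, η) =
      (a₂ : ℂ) ^ 2 * ∫ η, greenFlux f₂ g₂ (1, 0) (0, η) := by
    simp_rw [← integral_const_mul, hflux]
  rw [setIntegral_mul_layerOperator hf₁ hf₁supp hg₁ hg₁eig,
    setIntegral_mul_layerOperator hf₂ hf₂supp hg₂ hg₂eig, Measure.volume_eq_prod,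
    setIntegral_Iio_prod_univ_fderiv_fst (contDiff_greenFlux hf₁ hg₁ _) (hf₁supp.greenFlux g₁ _),
    setIntegral_Ioi_prod_univ_fderiv_fst (contDiff_greenFlux hf₂ hg₂ _) (hf₂supp.greenFlux g₂ _)]
  linear_combination hbdry
end
end

section
/- Let n ≥ 1 and let f : ℝ^n → ℝ be bounded and continuous. Define u on the open half-space {(x,y) : x > 0, y ∈ ℝ^n} by the Poisson integral u(x,y) = Γ((n+1)/2)·π^{−(n+1)/2}·∫_{ℝ^n} x·f(η)/((|y−η|² + x²)^{(n+1)/2}) dη. Then u is smooth and harmonic on the half-space: ∂²u/∂x² + Δ_y u = 0 for all x > 0, y ∈ ℝ^n. -/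
open MeasureTheory Set Filter

noncomputable section

/-- The Laplacian `Δ_y f = ∑ i, ∂²f/∂yᵢ²` of a real-valued function on `ℝⁿ`,
via the second iterated Fréchet derivative in the coordinate directions. -/
def lapR (n : ℕ) (f : EuclideanSpace ℝ (Fin n) → ℝ) (y : EuclideanSpace ℝ (Fin n)) : ℝ :=
  ∑ i : Fin n, iteratedFDeriv ℝ 2 f y
    ![EuclideanSpace.single i (1 : ℝ), EuclideanSpace.single i (1 : ℝ)]

theorem hasFTaylorSeriesUpToOn_integral {H α G : Type*} [NormedAddCommGroup H] [NormedSpace ℝ H]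
    [NormedAddCommGroup G] [NormedSpace ℝ G] [MeasurableSpace α]
    {μ : Measure α} {F : H → α → G} {U : Set H} (hU : IsOpen U)
    (hF : ∀ a, ContDiffOn ℝ (⊤ : ℕ∞) (F · a) U)
    (hmeas : ∀ k, ∀ z ∈ U, AEStronglyMeasurable (fun a => iteratedFDeriv ℝ k (F · a) z) μ)
    (hbound : ∀ k, ∀ z ∈ U, ∃ g : α → ℝ, Integrable g μ ∧ ∃ s ∈ nhds z,
      ∀ a, ∀ w ∈ s, ‖iteratedFDeriv ℝ k (F · a) w‖ ≤ g a) :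
    HasFTaylorSeriesUpToOn (⊤ : ℕ∞) (fun z => ∫ a, F z a ∂μ)
      (fun z k => ∫ a, iteratedFDeriv ℝ k (F · a) z ∂μ) U := by
  have hint (k : ℕ) (z : H) (hz : z ∈ U) :
      Integrable (fun a => iteratedFDeriv ℝ k (F · a) z) μ := by
    obtain ⟨g, hg, s, hs, hb⟩ := hbound k z hz
    exact hg.mono' (hmeas k z hz) (.of_forall fun a => hb a z (mem_of_mem_nhds hs))
  have hderiv (k : ℕ) (z : H) (hz : z ∈ U) :
      HasFDerivAt (fun z => ∫ a, iteratedFDeriv ℝ k (F · a) z ∂μ)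
        (∫ a, iteratedFDeriv ℝ (k + 1) (F · a) z ∂μ).curryLeft z := by
    obtain ⟨g, hg, s, hs, hb⟩ := hbound (k + 1) z hz
    let e := continuousMultilinearCurryLeftEquiv ℝ (fun _ : Fin (k + 1) => H) G
    have key : HasFDerivAt (fun z => ∫ a, iteratedFDeriv ℝ k (F · a) z ∂μ)
        (∫ a, e (iteratedFDeriv ℝ (k + 1) (F · a) z) ∂μ) z := by
      refine hasFDerivAt_integral_of_dominated_of_fderiv_le (bound := g)
        (F' := fun w a => e (iteratedFDeriv ℝ (k + 1) (F · a) w))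
        (inter_mem hs (hU.mem_nhds hz)) ?_ (hint k z hz) ?_ ?_ hg ?_
      · filter_upwards [hU.mem_nhds hz] with w hw using hmeas k w hw
      · exact e.continuous.comp_aestronglyMeasurable (hmeas (k + 1) z hz)
      · refine .of_forall fun a w hw => ?_
        rw [e.norm_map]
        exact hb a w hw.1
      · refine .of_forall fun a w hw => ?_
        have h1 : ContDiffAt ℝ (⊤ : ℕ∞) (F · a) w := (hF a).contDiffAt (hU.mem_nhds hw.2)
        have h2 : DifferentiableAt ℝ (iteratedFDeriv ℝ k (F · a)) w :=
          h1.differentiableAt_iteratedFDeriv (by exact_mod_cast ENat.natCast_lt_top k)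
        have h3 := h2.hasFDerivAt
        rwa [fderiv_iteratedFDeriv] at h3
    have hc : ∫ a, e (iteratedFDeriv ℝ (k + 1) (F · a) z) ∂μ =
        e (∫ a, iteratedFDeriv ℝ (k + 1) (F · a) z ∂μ) :=
      ContinuousLinearEquiv.integral_comp_comm (𝕜 := ℝ) (E := H [×(k + 1)]→L[ℝ] G)
        (F := H →L[ℝ] (H [×k]→L[ℝ] G)) e.toContinuousLinearEquiv _
    rw [hc] at key
    exact key
  refine ⟨fun z hz => ?_, fun m _ z hz => (hderiv m z hz).hasFDerivWithinAt,
    fun m _ z hz => (hderiv m z hz).continuousAt.continuousWithinAt⟩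
  have hc := (continuousMultilinearCurryFin0 ℝ H G).toContinuousLinearEquiv.integral_comp_comm
      (μ := μ) (fun a => iteratedFDeriv ℝ 0 (F · a) z)
  exact hc.symm

theorem iteratedFDeriv_two_diag_eq_deriv_deriv {H : Type*} [NormedAddCommGroup H]
    [NormedSpace ℝ H] {F : H → ℝ} {z : H} (hF : ContDiffAt ℝ 2 F z) (v : H) :
    iteratedFDeriv ℝ 2 F z ![v, v] = deriv (deriv fun t : ℝ => F (z + t • v)) 0 := by
  have hline (t : ℝ) : HasDerivAt (fun t : ℝ => z + t • v) v t := by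
    simpa using ((hasDerivAt_id t).smul_const v).const_add z
  have hev : ∀ᶠ w in nhds z, DifferentiableAt ℝ F w := by
    filter_upwards [hF.eventually (by simp)] with w hw using hw.differentiableAt (by simp)
  have hcont : Tendsto (fun t : ℝ => z + t • v) (nhds 0) (nhds z) := by
    simpa using (hline 0).continuousAt.tendsto
  have h1 : deriv (fun t : ℝ => F (z + t • v)) =ᶠ[nhds 0] fun t => fderiv ℝ F (z + t • v) v := by
    filter_upwards [hcont.eventually hev] with t ht
    exact (ht.hasFDerivAt.comp_hasDerivAt t (hline t)).deriv
  have h2 : DifferentiableAt ℝ (fderiv ℝ F) z :=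
    (hF.fderiv_right (m := 1) (by norm_num)).differentiableAt (by simp)
  have h3 : HasDerivAt (fun t : ℝ => fderiv ℝ F (z + t • v)) (fderiv ℝ (fderiv ℝ F) z v) 0 := by
    refine HasFDerivAt.comp_hasDerivAt (0 : ℝ) ?_ (hline 0)
    simpa using h2.hasFDerivAt
  rw [h1.deriv_eq, iteratedFDeriv_two_apply]
  simpa using (h3.clm_apply (hasDerivAt_const (0 : ℝ) v)).deriv.symm

/-- The Poisson kernel of the half-space, without its normalising constant. -/
def poissonKernelAux (n : ℕ) (z : ℝ × EuclideanSpace ℝ (Fin n)) : ℝ :=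
  z.1 / (‖z.2‖ ^ 2 + z.1 ^ 2) ^ (((n : ℝ) + 1) / 2)

section Kernel

variable {n : ℕ}

theorem sq_add_sq_pos_of_ne_zero {E : Type*} [NormedAddCommGroup E] {z : ℝ × E} (hz : z ≠ 0) :
    0 < ‖z.2‖ ^ 2 + z.1 ^ 2 := by
  by_contra! h
  have h1 : z.1 = 0 := by nlinarith [sq_nonneg ‖z.2‖, sq_nonneg z.1]
  have h2 : ‖z.2‖ = 0 := by nlinarith [sq_nonneg ‖z.2‖, sq_nonneg z.1]
  exact hz (Prod.ext h1 (norm_eq_zero.mp h2))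

theorem contDiffAt_poissonKernelAux {z : ℝ × EuclideanSpace ℝ (Fin n)} (hz : z ≠ 0) :
    ContDiffAt ℝ (⊤ : ℕ∞) (poissonKernelAux n) z := by
  have h := sq_add_sq_pos_of_ne_zero hz
  have h2 : ContDiffAt ℝ (⊤ : ℕ∞)
      (fun z : ℝ × EuclideanSpace ℝ (Fin n) => ‖z.2‖ ^ 2 + z.1 ^ 2) z :=
    ((contDiff_snd.norm_sq ℝ).add (contDiff_fst.pow 2)).contDiffAt
  exact contDiffAt_fst.div (h2.rpow_const_of_ne h.ne') (Real.rpow_pos_of_pos h _).ne'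

theorem poissonKernelAux_smul {t : ℝ} (ht : 0 < t) (z : ℝ × EuclideanSpace ℝ (Fin n)) :
    poissonKernelAux n (t • z) = (t ^ n)⁻¹ * poissonKernelAux n z := by
  have h1 : ‖(t • z).2‖ ^ 2 + (t • z).1 ^ 2 = t ^ 2 * (‖z.2‖ ^ 2 + z.1 ^ 2) := by
    simp only [Prod.smul_snd, Prod.smul_fst, norm_smul, smul_eq_mul, mul_pow, Real.norm_eq_abs,
      sq_abs]
    ring
  have h2 : (t ^ 2) ^ (((n : ℝ) + 1) / 2) = t ^ (n + 1) := by
    rw [← Real.rpow_natCast t 2, ← Real.rpow_mul ht.le, ← Real.rpow_natCast]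
    congr 1
    push_cast
    ring
  rw [poissonKernelAux, h1, Real.mul_rpow (by positivity) (by positivity), h2, poissonKernelAux]
  simp only [Prod.smul_fst, smul_eq_mul]
  field_simp
  ring

theorem norm_iteratedFDeriv_poissonKernelAux_smul (k : ℕ) {t : ℝ} (ht : 0 < t)
    {z : ℝ × EuclideanSpace ℝ (Fin n)} (hz : z ≠ 0) :
    t ^ k * ‖iteratedFDeriv ℝ k (poissonKernelAux n) (t • z)‖ =
      (t ^ n)⁻¹ * ‖iteratedFDeriv ℝ k (poissonKernelAux n) z‖ := by
  let e : (ℝ × EuclideanSpace ℝ (Fin n)) ≃L[ℝ] (ℝ × EuclideanSpace ℝ (Fin n)) :=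
    ContinuousLinearEquiv.smulLeft (Units.mk0 t ht.ne')
  have h1 := e.iteratedFDerivWithin_comp_right (poissonKernelAux n) uniqueDiffOn_univ
    (x := z) (mem_univ _) k
  rw [preimage_univ, iteratedFDerivWithin_univ, iteratedFDerivWithin_univ] at h1
  have h2 : poissonKernelAux n ∘ e = fun z => (t ^ n)⁻¹ • poissonKernelAux n z :=
    funext fun z => poissonKernelAux_smul ht z
  have h4 : (iteratedFDeriv ℝ k (poissonKernelAux n) (e z)).compContinuousLinearMap
      (fun _ => (e : (ℝ × EuclideanSpace ℝ (Fin n)) →L[ℝ] (ℝ × EuclideanSpace ℝ (Fin n)))) =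
      t ^ k • iteratedFDeriv ℝ k (poissonKernelAux n) (t • z) := by
    ext v
    have := (iteratedFDeriv ℝ k (poissonKernelAux n) (t • z)).map_smul_univ (fun _ => t) v
    rw [Finset.prod_const, Finset.card_univ, Fintype.card_fin] at this
    exact this
  rw [h2, h4, iteratedFDeriv_const_smul_apply' ((contDiffAt_poissonKernelAux hz).of_le
    (by exact_mod_cast le_top))] at h1
  have h5 := congrArg norm h1
  rw [norm_smul, norm_smul, Real.norm_of_nonneg (by positivity),
    Real.norm_of_nonneg (by positivity)] at h5
  exact h5.symm

theorem continuousOn_iteratedFDeriv_poissonKernelAux (k : ℕ) :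
    ContinuousOn (iteratedFDeriv ℝ k (poissonKernelAux n)) {0}ᶜ := fun _ hz =>
  (ContDiffAt.continuousAt ((contDiffAt_poissonKernelAux hz).iteratedFDeriv_right (m := 0)
    (i := k) (by simp; exact_mod_cast le_top))).continuousWithinAt

theorem exists_norm_iteratedFDeriv_poissonKernelAux_le (n k : ℕ) :
    ∃ C, 0 ≤ C ∧ ∀ z : ℝ × EuclideanSpace ℝ (Fin n), z ≠ 0 →
      ‖iteratedFDeriv ℝ k (poissonKernelAux n) z‖ ≤ C * (‖z‖ ^ (n + k))⁻¹ := by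
  obtain ⟨C, hC⟩ := (isCompact_sphere (0 : ℝ × EuclideanSpace ℝ (Fin n))
    1).exists_bound_of_continuousOn
      ((continuousOn_iteratedFDeriv_poissonKernelAux (n := n) k).mono fun z hz h0 => by simp_all)
  refine ⟨max C 0, le_max_right _ _, fun z hz => ?_⟩
  have hp : 0 < ‖z‖ := norm_pos_iff.mpr hz
  have h1 := norm_iteratedFDeriv_poissonKernelAux_smul k (inv_pos.mpr hp) hz
  have h2 := hC (‖z‖⁻¹ • z) (by simp [norm_smul, hp.ne'])
  have h3 : ‖iteratedFDeriv ℝ k (poissonKernelAux n) z‖ =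
      ‖iteratedFDeriv ℝ k (poissonKernelAux n) (‖z‖⁻¹ • z)‖ * (‖z‖ ^ (n + k))⁻¹ := by
    rw [inv_pow, inv_pow, inv_inv, inv_mul_eq_iff_eq_mul₀ (by positivity)] at h1
    rw [h1, pow_add]
    field_simp
  rw [h3]
  gcongr
  exact h2.trans (le_max_left _ _)

theorem abs_poissonKernelAux_le {z : ℝ × EuclideanSpace ℝ (Fin n)} (hz : 0 < z.1) :
    |poissonKernelAux n z| ≤ z.1 * (‖z‖ ^ (n + 1))⁻¹ := by
  have h0 : 0 < ‖z‖ := norm_pos_iff.mpr fun h => by simp [h] at hz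
  have h1 : ‖z‖ ^ 2 ≤ ‖z.2‖ ^ 2 + z.1 ^ 2 := by
    rcases max_cases ‖z.1‖ ‖z.2‖ with h | h <;> rw [Prod.norm_def, h.1]
    · rw [Real.norm_eq_abs, sq_abs]
      nlinarith [sq_nonneg ‖z.2‖]
    · nlinarith [sq_nonneg z.1]
  have h2 : (‖z‖ ^ 2) ^ (((n : ℝ) + 1) / 2) = ‖z‖ ^ (n + 1) := by
    rw [← Real.rpow_natCast ‖z‖ 2, ← Real.rpow_mul h0.le, ← Real.rpow_natCast]
    congr 1
    push_cast
    ring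
  rw [poissonKernelAux, abs_of_nonneg (by positivity), div_eq_mul_inv, ← h2]
  gcongr

theorem exists_norm_iteratedFDeriv_poissonKernelAux_le_of_mem_Icc (n k : ℕ) {δ R : ℝ}
    (hδ : 0 < δ) :
    ∃ C, 0 ≤ C ∧ ∀ z : ℝ × EuclideanSpace ℝ (Fin n), δ ≤ z.1 → z.1 ≤ R →
      ‖iteratedFDeriv ℝ k (poissonKernelAux n) z‖ ≤ C * (‖z‖ ^ (n + 1))⁻¹ := by
  rcases k with _ | k
  · refine ⟨max R 0, le_max_right _ _, fun z h1 h2 => ?_⟩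
    rw [norm_iteratedFDeriv_zero]
    refine (abs_poissonKernelAux_le (hδ.trans_le h1)).trans ?_
    gcongr
    exact h2.trans (le_max_left _ _)
  · obtain ⟨C, hC0, hC⟩ := exists_norm_iteratedFDeriv_poissonKernelAux_le n (k + 1)
    refine ⟨C * (δ ^ k)⁻¹, by positivity, fun z h1 _ => ?_⟩
    have hz : z ≠ 0 := fun h => by simp [h] at h1; linarith
    have h2 : δ ≤ ‖z‖ := h1.trans ((le_abs_self _).trans (norm_fst_le z))
    refine (hC z hz).trans ?_
    rw [show n + (k + 1) = k + (n + 1) by ring, pow_add, mul_inv, mul_assoc]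
    gcongr

theorem sub_zero_mk_ne_zero {E : Type*} [AddGroup E] {z : ℝ × E} (hz : 0 < z.1) (η : E) :
    z - (0, η) ≠ 0 := fun h => by
  have := congrArg Prod.fst h
  simp only [Prod.fst_sub, sub_zero, Prod.fst_zero] at this
  exact hz.ne' this

theorem contDiffAt_poissonKernelAux_sub {z : ℝ × EuclideanSpace ℝ (Fin n)} (hz : 0 < z.1)
    (η : EuclideanSpace ℝ (Fin n)) :
    ContDiffAt ℝ (⊤ : ℕ∞) (fun z => poissonKernelAux n (z - (0, η))) z :=
  (contDiffAt_poissonKernelAux (sub_zero_mk_ne_zero hz η)).comp z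
    (contDiffAt_id.sub contDiffAt_const)

theorem iteratedFDeriv_mul_poissonKernelAux_sub (k : ℕ) {z : ℝ × EuclideanSpace ℝ (Fin n)}
    (hz : 0 < z.1) (η : EuclideanSpace ℝ (Fin n)) (a : ℝ) :
    iteratedFDeriv ℝ k (fun z => a * poissonKernelAux n (z - (0, η))) z =
      a • iteratedFDeriv ℝ k (poissonKernelAux n) (z - (0, η)) := by
  rw [← iteratedFDeriv_comp_sub]
  exact iteratedFDeriv_const_smul_apply' (a := a)
    ((contDiffAt_poissonKernelAux_sub hz η).of_le (by exact_mod_cast le_top))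

theorem hasFTaylorSeriesUpToOn_poissonIntegral {f : EuclideanSpace ℝ (Fin n) → ℝ}
    (hf : Continuous f) {M : ℝ} (hM : ∀ η, |f η| ≤ M) :
    HasFTaylorSeriesUpToOn (⊤ : ℕ∞)
      (fun z : ℝ × EuclideanSpace ℝ (Fin n) =>
        ∫ η : EuclideanSpace ℝ (Fin n), f η * poissonKernelAux n (z - (0, η)))
      (fun z k => ∫ η : EuclideanSpace ℝ (Fin n),
        iteratedFDeriv ℝ k (fun z => f η * poissonKernelAux n (z - (0, η))) z)
      {z | 0 < z.1} := by
  have hU : IsOpen {z : ℝ × EuclideanSpace ℝ (Fin n) | 0 < z.1} :=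
    isOpen_lt continuous_const continuous_fst
  refine hasFTaylorSeriesUpToOn_integral hU
    (fun η z hz => (contDiffAt_const.mul (contDiffAt_poissonKernelAux_sub hz η)).contDiffWithinAt)
    (fun k z hz => ?_) fun k z hz => ?_
  · simp_rw [fun η => iteratedFDeriv_mul_poissonKernelAux_sub k hz η (f η)]
    refine (hf.smul ?_).aestronglyMeasurable
    exact (continuousOn_iteratedFDeriv_poissonKernelAux k).comp_continuous (by fun_prop)
      fun η => sub_zero_mk_ne_zero hz η
  · replace hz : 0 < z.1 := hz
    set δ := z.1 / 2 with hδ_def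
    have hδ : 0 < δ := half_pos hz
    obtain ⟨C, hC0, hC⟩ := exists_norm_iteratedFDeriv_poissonKernelAux_le_of_mem_Icc n k
      (R := 3 * δ) hδ
    have hM0 : 0 ≤ M := (abs_nonneg _).trans (hM 0)
    set c := (1 + ‖z‖ + δ) / δ + 1 with hc
    have hc0 : 0 < c := by positivity
    refine ⟨fun η => M * (C * c ^ (n + 1)) * (1 + ‖η‖) ^ (-((n : ℝ) + 1)),
      (integrable_one_add_norm (by simp)).const_mul _, Metric.ball z δ,
      Metric.ball_mem_nhds z hδ, fun η w hw => ?_⟩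
    have hwz : ‖w - z‖ < δ := by simpa [dist_eq_norm] using hw
    have h1 : |w.1 - z.1| < δ := (norm_fst_le (w - z)).trans_lt hwz
    obtain ⟨h1a, h1b⟩ := abs_lt.mp h1
    have hw0 : 0 < w.1 := by linarith
    have hlow : δ ≤ ‖w - (0, η)‖ := by
      have := (le_abs_self _).trans (norm_fst_le (w - (0, η)))
      simp only [Prod.fst_sub, sub_zero] at this
      linarith
    have hη : 1 + ‖η‖ ≤ c * ‖w - (0, η)‖ := by
      have h2 : ‖w.2‖ ≤ ‖z‖ + δ := by
        have h3 : ‖w.2‖ ≤ ‖w‖ := norm_snd_le w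
        have h4 : ‖w‖ ≤ ‖z‖ + ‖w - z‖ := norm_le_norm_add_norm_sub' w z
        linarith
      have h5 : ‖w.2 - η‖ ≤ ‖w - (0, η)‖ := norm_snd_le (w - (0, η))
      have h6 : ‖η‖ ≤ ‖w.2‖ + ‖w.2 - η‖ := norm_le_norm_add_norm_sub w.2 η
      have h7 : 1 + ‖z‖ + δ ≤ (1 + ‖z‖ + δ) / δ * ‖w - (0, η)‖ := by
        rw [div_mul_eq_mul_div, le_div_iff₀ hδ]
        gcongr
      rw [hc, add_mul]
      linarith
    have hp : 0 < ‖w - (0, η)‖ := hδ.trans_le hlow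
    have h8 : (‖w - (0, η)‖ ^ (n + 1))⁻¹ ≤ c ^ (n + 1) * (1 + ‖η‖) ^ (-((n : ℝ) + 1)) := by
      rw [Real.rpow_neg (by positivity), ← Nat.cast_add_one, Real.rpow_natCast,
        ← div_eq_mul_inv, inv_eq_one_div, div_le_div_iff₀ (by positivity) (by positivity), one_mul,
        ← mul_pow]
      gcongr
    beta_reduce
    rw [iteratedFDeriv_mul_poissonKernelAux_sub k hw0, norm_smul, mul_assoc, mul_assoc]
    gcongr
    · exact hM η
    · refine (hC _ ?_ ?_).trans ?_
      · simp only [Prod.fst_sub, sub_zero]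
        linarith
      · simp only [Prod.fst_sub, sub_zero]
        linarith
      · gcongr

theorem deriv_deriv_linear_mul_quadratic_rpow {α β a b s : ℝ} (ha : 0 < a) :
    deriv (deriv fun t : ℝ => (α + t * β) * (a + 2 * b * t + t ^ 2) ^ (-s)) 0 =
      α * (-2 * s * a ^ (-s - 1) + 4 * s * (s + 1) * b ^ 2 * a ^ (-s - 1 - 1))
        - 4 * s * β * b * a ^ (-s - 1) := by
  have hq (t : ℝ) : HasDerivAt (fun t : ℝ => a + 2 * b * t + t ^ 2) (2 * b + 2 * t) t := by
    have h := (((hasDerivAt_id t).const_mul (2 * b)).const_add a).add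
      (hasDerivAt_pow 2 t)
    refine h.congr_deriv ?_
    simp
  have hl (t : ℝ) : HasDerivAt (fun t : ℝ => α + t * β) β t := by
    simpa using ((hasDerivAt_id t).mul_const β).const_add α
  have hpos : ∀ᶠ t in nhds (0 : ℝ), 0 < a + 2 * b * t + t ^ 2 :=
    (hq 0).continuousAt.eventually_const_lt (by simpa using ha)
  have h1 : (deriv fun t : ℝ => (α + t * β) * (a + 2 * b * t + t ^ 2) ^ (-s)) =ᶠ[nhds 0]
      fun t => β * (a + 2 * b * t + t ^ 2) ^ (-s) + (α + t * β) *
        ((2 * b + 2 * t) * (-s) * (a + 2 * b * t + t ^ 2) ^ (-s - 1)) := by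
    filter_upwards [hpos] with t ht
    exact ((hl t).mul ((hq t).rpow_const (.inl ht.ne'))).deriv
  have h0 : a + 2 * b * 0 + 0 ^ 2 ≠ 0 := by simpa using ha.ne'
  have hd : HasDerivAt (fun t : ℝ => (2 * b + 2 * t) * (-s)) (2 * (-s)) 0 := by
    simpa using (((hasDerivAt_id (0 : ℝ)).const_mul 2).const_add (2 * b)).mul_const (-s)
  have h2 := (((hq 0).rpow_const (p := -s) (.inl h0)).const_mul β).add
    ((hl 0).mul (hd.mul ((hq 0).rpow_const (p := -s - 1) (.inl h0))))
  rw [h1.deriv_eq]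
  refine h2.deriv.trans ?_
  simp only [Pi.mul_apply, mul_zero, add_zero, zero_mul, ne_eq, OfNat.ofNat_ne_zero,
    not_false_eq_true, zero_pow]
  ring

theorem iteratedFDeriv_two_poissonKernelAux {z : ℝ × EuclideanSpace ℝ (Fin n)} (hz : z ≠ 0)
    (v : ℝ × EuclideanSpace ℝ (Fin n)) (hv : ‖v.2‖ ^ 2 + v.1 ^ 2 = 1) :
    iteratedFDeriv ℝ 2 (poissonKernelAux n) z ![v, v] =
      z.1 * (-(n + 1) * (‖z.2‖ ^ 2 + z.1 ^ 2) ^ (-(((n : ℝ) + 1) / 2) - 1) +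
        (n + 1) * (n + 3) * (inner ℝ z.2 v.2 + z.1 * v.1) ^ 2 *
          (‖z.2‖ ^ 2 + z.1 ^ 2) ^ (-(((n : ℝ) + 1) / 2) - 1 - 1))
        - 2 * (n + 1) * v.1 * (inner ℝ z.2 v.2 + z.1 * v.1) *
          (‖z.2‖ ^ 2 + z.1 ^ 2) ^ (-(((n : ℝ) + 1) / 2) - 1) := by
  have hline : (fun t : ℝ => poissonKernelAux n (z + t • v)) = fun t : ℝ => (z.1 + t * v.1) *
      (‖z.2‖ ^ 2 + z.1 ^ 2 + 2 * (inner ℝ z.2 v.2 + z.1 * v.1) * t + t ^ 2) ^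
        (-(((n : ℝ) + 1) / 2)) := by
    funext t
    have h : ‖(z + t • v).2‖ ^ 2 + (z + t • v).1 ^ 2 =
        ‖z.2‖ ^ 2 + z.1 ^ 2 + 2 * (inner ℝ z.2 v.2 + z.1 * v.1) * t + t ^ 2 := by
      rw [Prod.snd_add, Prod.smul_snd, norm_add_sq_real, inner_smul_right, norm_smul,
        mul_pow, Real.norm_eq_abs, sq_abs, Prod.fst_add, Prod.smul_fst, smul_eq_mul]
      linear_combination t ^ 2 * hv
    rw [poissonKernelAux, h, Real.rpow_neg (h ▸ by positivity), div_eq_mul_inv]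
    simp
  rw [iteratedFDeriv_two_diag_eq_deriv_deriv ((contDiffAt_poissonKernelAux hz).of_le
    (WithTop.coe_le_coe.2 (le_top : (2 : ℕ∞) ≤ ⊤))), hline,
    deriv_deriv_linear_mul_quadratic_rpow (sq_add_sq_pos_of_ne_zero hz)]
  ring

theorem poissonKernelAux_harmonic {z : ℝ × EuclideanSpace ℝ (Fin n)} (hz : z ≠ 0) :
    iteratedFDeriv ℝ 2 (poissonKernelAux n) z ![(1, 0), (1, 0)] +
      ∑ i : Fin n, iteratedFDeriv ℝ 2 (poissonKernelAux n) z
        ![(0, EuclideanSpace.single i 1), (0, EuclideanSpace.single i 1)] = 0 := by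
  have ha := sq_add_sq_pos_of_ne_zero hz
  have hpow : (‖z.2‖ ^ 2 + z.1 ^ 2) ^ (-(((n : ℝ) + 1) / 2) - 1) =
      (‖z.2‖ ^ 2 + z.1 ^ 2) * (‖z.2‖ ^ 2 + z.1 ^ 2) ^ (-(((n : ℝ) + 1) / 2) - 1 - 1) := by
    rw [Real.rpow_sub_one ha.ne' (-(((n : ℝ) + 1) / 2) - 1)]
    field_simp
  have hsum : ∑ i, z.2 i ^ 2 = ‖z.2‖ ^ 2 := (EuclideanSpace.real_norm_sq_eq z.2).symm
  rw [iteratedFDeriv_two_poissonKernelAux hz _ (by simp),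
    Finset.sum_congr rfl fun i _ => iteratedFDeriv_two_poissonKernelAux hz _ (by simp)]
  simp only [EuclideanSpace.inner_single_right, inner_zero_right, mul_zero, add_zero, zero_mul,
    sub_zero, mul_one, zero_add, one_mul, conj_trivial, hpow]
  rw [← Finset.mul_sum, Finset.sum_add_distrib, ← Finset.sum_mul, ← Finset.sum_mul, ← Finset.mul_sum,
    hsum]
  simp only [Finset.sum_const, Finset.card_univ, Fintype.card_fin, nsmul_eq_mul]
  ring

end Kernel

/-- for `f : ℝⁿ → ℝ` bounded and continuous, the Poisson integral
`u(x,y) = Γ((n+1)/2)·π^{−(n+1)/2}·∫_{ℝⁿ} x·f(η)/((|y−η|²+x²)^{(n+1)/2}) dη`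
is smooth and harmonic on the half-space `{x > 0}`: `∂²u/∂x² + Δ_y u = 0`. -/
theorem stmt9 (n : ℕ) (hn : 1 ≤ n) (f : EuclideanSpace ℝ (Fin n) → ℝ)
    (hf_cont : Continuous f) (hf_bdd : ∃ C, ∀ η, |f η| ≤ C)
    (u : ℝ → EuclideanSpace ℝ (Fin n) → ℝ)
    (hu : ∀ (x : ℝ) (y : EuclideanSpace ℝ (Fin n)), u x y =
      Real.Gamma (((n : ℝ) + 1) / 2) * Real.pi ^ (-(((n : ℝ) + 1) / 2)) *
        ∫ η : EuclideanSpace ℝ (Fin n),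
          x * f η / ((‖y - η‖ ^ 2 + x ^ 2) ^ (((n : ℝ) + 1) / 2))) :
    ContDiffOn ℝ (⊤ : ℕ∞) (fun p : ℝ × EuclideanSpace ℝ (Fin n) => u p.1 p.2)
      {p : ℝ × EuclideanSpace ℝ (Fin n) | 0 < p.1} ∧
    ∀ x : ℝ, 0 < x → ∀ y : EuclideanSpace ℝ (Fin n),
      deriv (deriv (fun s => u s y)) x + lapR n (u x) y = 0 := by
  obtain ⟨C, hC⟩ := hf_bdd
  set c := Real.Gamma (((n : ℝ) + 1) / 2) * Real.pi ^ (-(((n : ℝ) + 1) / 2))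
  have hu' (x : ℝ) (y : EuclideanSpace ℝ (Fin n)) :
      u x y = ∫ η : EuclideanSpace ℝ (Fin n), c * f η * poissonKernelAux n ((x, y) - (0, η)) := by
    rw [hu, ← integral_const_mul]
    congr 1 with η
    simp only [poissonKernelAux, Prod.fst_sub, Prod.snd_sub, sub_zero]
    ring
  have hT := hasFTaylorSeriesUpToOn_poissonIntegral (hf_cont.const_mul c) (M := |c| * C)
    fun η => by
      rw [abs_mul]
      gcongr
      exact hC η
  have hueq : (fun z : ℝ × EuclideanSpace ℝ (Fin n) => u z.1 z.2) = fun z =>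
      ∫ η : EuclideanSpace ℝ (Fin n), c * f η * poissonKernelAux n (z - (0, η)) :=
    funext fun z => hu' z.1 z.2
  rw [← hueq] at hT
  have hU : IsOpen {z : ℝ × EuclideanSpace ℝ (Fin n) | 0 < z.1} :=
    isOpen_lt continuous_const continuous_fst
  refine ⟨hT.contDiffOn, fun x hx y => ?_⟩
  have hxy : ((x, y) : ℝ × EuclideanSpace ℝ (Fin n)) ∈
      {z : ℝ × EuclideanSpace ℝ (Fin n) | 0 < z.1} := hx
  have hsmooth : ContDiffAt ℝ 2 (fun z : ℝ × EuclideanSpace ℝ (Fin n) => u z.1 z.2) (x, y) :=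
    (hT.contDiffOn.contDiffAt (hU.mem_nhds hxy)).of_le
      (WithTop.coe_le_coe.2 (le_top : (2 : ℕ∞) ≤ ⊤))
  have hsmooth_y : ContDiffAt ℝ 2 (u x) y :=
    hsmooth.comp y (contDiffAt_const.prodMk contDiffAt_id)
  have hx_deriv : deriv (deriv fun s => u s y) x = iteratedFDeriv ℝ 2
      (fun z : ℝ × EuclideanSpace ℝ (Fin n) => u z.1 z.2) (x, y) ![(1, 0), (1, 0)] := by
    rw [iteratedFDeriv_two_diag_eq_deriv_deriv hsmooth]
    have h1 : (deriv fun t : ℝ => u ((x, y) + t • ((1 : ℝ), (0 : EuclideanSpace ℝ (Fin n)))).1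
        ((x, y) + t • ((1 : ℝ), (0 : EuclideanSpace ℝ (Fin n)))).2) =
        fun t => deriv (fun s => u s y) (x + t) := by
      funext t
      simpa using deriv_comp_const_add (fun s => u s y) x t
    rw [h1, deriv_comp_const_add, add_zero]
  have hy_deriv (i : Fin n) : iteratedFDeriv ℝ 2 (u x) y
      ![EuclideanSpace.single i (1 : ℝ), EuclideanSpace.single i (1 : ℝ)] = iteratedFDeriv ℝ 2
      (fun z : ℝ × EuclideanSpace ℝ (Fin n) => u z.1 z.2) (x, y)
        ![(0, EuclideanSpace.single i 1), (0, EuclideanSpace.single i 1)] := by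
    rw [iteratedFDeriv_two_diag_eq_deriv_deriv hsmooth,
      iteratedFDeriv_two_diag_eq_deriv_deriv hsmooth_y]
    simp
  have hD := hT.eq_iteratedFDerivWithin_of_uniqueDiffOn (m := 2)
    (WithTop.coe_le_coe.2 (le_top : (2 : ℕ∞) ≤ ⊤)) hU.uniqueDiffOn hxy
  rw [iteratedFDerivWithin_of_isOpen 2 hU hxy] at hD
  rw [lapR, hx_deriv, Finset.sum_congr rfl fun i _ => hy_deriv i, ← hD]
  by_cases hint : Integrable fun η : EuclideanSpace ℝ (Fin n) => iteratedFDeriv ℝ 2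
      (fun z => c * f η * poissonKernelAux n (z - (0, η))) ((x, y) : ℝ × EuclideanSpace ℝ (Fin n))
  · have happ (v : Fin 2 → ℝ × EuclideanSpace ℝ (Fin n)) :
        Integrable fun η : EuclideanSpace ℝ (Fin n) => iteratedFDeriv ℝ 2
          (fun z => c * f η * poissonKernelAux n (z - (0, η))) (x, y) v :=
      (ContinuousMultilinearMap.apply ℝ _ ℝ v).integrable_comp hint
    simp only [ContinuousMultilinearMap.integral_apply hint]
    rw [← integral_finsetSum _ fun i _ => happ _, ← integral_add (happ _)
      (integrable_finsetSum _ fun i _ => happ _)]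
    refine integral_eq_zero_of_ae (.of_forall fun η => ?_)
    have hK := poissonKernelAux_harmonic (sub_zero_mk_ne_zero hxy η)
    simp only [iteratedFDeriv_mul_poissonKernelAux_sub 2 hxy, smul_apply,
      smul_eq_mul, ← Finset.mul_sum, ← mul_add, hK, mul_zero, Pi.zero_apply]
  · simp [integral_undef hint]
end
end
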